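/- For every integer n ≥ 1, one has the (p,q)-γ-expansion Σ_{σ ∈ S_n} p^{des*(σ)} q^{maj(σ)−exc(σ)} t^{exc(σ)} = Σ_{k=0}^{⌊(n−1)/2⌋} ξ_{n,k}(p,q) · t^{k} (1+t)^{n−1−2k}, where ξ_{n,k}(p,q) = Σ p^{des(σ^{-1})} q^{maj(σ^{-1})}, the sum running over all permutations σ ∈ S_n whose descent set DES(σ) is a subset of {1,…,n−2} containing no two consecutive integers and has exactly k elements (i.e., σ has k descents, no double descents, and no last descent). -/

import Mathlib

open Polynomial Finset

/-- `S` contains no two consecutive integers. -/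
def NoTwoConsec (S : Finset ℕ) : Prop := ∀ i ∈ S, i + 1 ∉ S

instance (S : Finset ℕ) : Decidable (NoTwoConsec S) :=
  inferInstanceAs (Decidable (∀ i ∈ S, i + 1 ∉ S))

/-- `σ(i)` in one-line notation, as a value in `{1, …, n}` for `i ∈ {1, …, n}`
(and `0` for out-of-range `i`). -/
def pval {n : ℕ} (σ : Equiv.Perm (Fin n)) (i : ℕ) : ℕ :=
  if h : 1 ≤ i ∧ i ≤ n then (σ ⟨i - 1, by omega⟩ : ℕ) + 1 else 0

/-- The descent set `DES(σ) = {i ∈ {1,…,n-1} : σ(i) > σ(i+1)}`. -/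
def pDES {n : ℕ} (σ : Equiv.Perm (Fin n)) : Finset ℕ :=
  (Finset.Icc 1 (n - 1)).filter fun i => pval σ (i + 1) < pval σ i

/-- The major index `maj(σ) = Σ_{i ∈ DES(σ)} i`. -/
def pmaj {n : ℕ} (σ : Equiv.Perm (Fin n)) : ℕ := ∑ i ∈ pDES σ, i

/-- The excedance number `exc(σ) = #{i : σ(i) > i}`. -/
def pexc {n : ℕ} (σ : Equiv.Perm (Fin n)) : ℕ :=
  ((Finset.Icc 1 n).filter fun i => i < pval σ i).card

/-- The inversion number `inv(σ) = #{(i,j) : 1 ≤ i < j ≤ n, σ(i) > σ(j)}`. -/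
def pinv {n : ℕ} (σ : Equiv.Perm (Fin n)) : ℕ :=
  (((Finset.Icc 1 n) ×ˢ (Finset.Icc 1 n)).filter
    fun p => p.1 < p.2 ∧ pval σ p.2 < pval σ p.1).card

/-- The number of descents `des(σ) = |DES(σ)|`. -/
def pdes {n : ℕ} (σ : Equiv.Perm (Fin n)) : ℕ := (pDES σ).card

/-- `des*(σ) = des(σ)` if `σ(1) = 1`, and `des(σ) - 1` if `σ(1) > 1`. -/
def pdesStar {n : ℕ} (σ : Equiv.Perm (Fin n)) : ℕ :=
  if pval σ 1 = 1 then pdes σ else pdes σ - 1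

/-!
Flagging the letters of `σ` that are not excedances makes the excedance letters smaller than all
others; the descent set `DEX(σ)` of the flagged word has `des*(σ)` elements, whose sum is
`maj(σ) - exc(σ)`. By inclusion-exclusion it is therefore enough to prove, for every set `T`, that
the sum of `t ^ exc(σ)` over `DEX(σ) ⊆ T` equals the sum of `t ^ k * (1 + t) ^ (n - 1 - 2 * k)` over
the admissible `σ` with `DES(σ⁻¹) ⊆ T`.

Cutting the positions at `T` and sorting turns both sums into the coefficient of one monomial: on
the right in the generating function `G` of words weighted by their descents, on the left in a
product of linear forms. Reading a word from the left gives a recursion that telescopes to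
`G = Y * (t * G + (1 - t))`, where `Y = ∏ c, (1 - t * x c * z) / (1 - x c * z)`. Hence
`G = ∑ j, t ^ j * (Y * ((Y - 1) / (1 - t)) ^ j)`, and extracting the coefficients of the powers of
`Y` one letter at a time yields the product of linear forms.
-/

/-! ### The power series `(1 - (1 - s) X) / (1 - X)` -/

section RatioSeries

section Semiring

variable {R : Type*} [CommSemiring R]

theorem coeff_C_add_C_mul_X_pow (u s : R) (i m : ℕ) :
    ((C u + C s * X) ^ i : R[X]).coeff m = u ^ (i - m) * s ^ m * i.choose m := by
  have hcomp : (C u + C s * X : R[X]) ^ i = ((X + C u) ^ i).comp (C s * X) := by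
    simp only [pow_comp, add_comp, X_comp, C_comp, add_comm]
  rw [hcomp, comp_C_mul_X_coeff, coeff_X_add_C_pow, mul_right_comm]

theorem coeff_C_add_X_pow_mul_pow (u s : R) {i k m : ℕ} (hm : m ≤ i + k) :
    ((C u + C s * X) ^ i * (C u + X) ^ k : R[X]).coeff m =
      u ^ (i + k - m) * ((1 + C s * X) ^ i * (1 + X) ^ k : R[X]).coeff m := by
  have hX (v : R) : (C v + X : R[X]) = C v + C 1 * X := by rw [C_1, one_mul]
  rw [← C_1, hX u, hX 1, coeff_mul, coeff_mul, mul_sum]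
  refine sum_congr rfl fun ⟨x, y⟩ hxy => ?_
  rw [HasAntidiagonal.mem_antidiagonal] at hxy
  simp only [coeff_C_add_C_mul_X_pow, one_pow, one_mul, mul_one]
  rcases le_or_gt x i with hx | hx
  · rcases le_or_gt y k with hy | hy
    · rw [show i + k - m = (i - x) + (k - y) by lia, pow_add]
      ring
    · simp [Nat.choose_eq_zero_of_lt hy]
  · simp [Nat.choose_eq_zero_of_lt hx]

/-- The power series `(1 - (1 - s) X) / (1 - X)`, written without division. -/
noncomputable def ratioSeries (s : R) : PowerSeries R :=
  1 + PowerSeries.C s * PowerSeries.X * PowerSeries.mk 1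

theorem coeff_zero_ratioSeries_pow (s : R) (i : ℕ) :
    PowerSeries.coeff 0 (ratioSeries s ^ i) = 1 := by
  simp [ratioSeries]

end Semiring

variable {R : Type*} [CommRing R]

theorem one_sub_X_mul_ratioSeries (s : R) :
    (1 - PowerSeries.X) * ratioSeries s = 1 - PowerSeries.C (1 - s) * PowerSeries.X := by
  have hgeom := PowerSeries.mk_one_mul_one_sub_eq_one R
  rw [ratioSeries, map_sub, map_one]
  linear_combination PowerSeries.C s * PowerSeries.X * hgeom

theorem coeff_succ_ratioSeries_pow_succ (s : R) (i k : ℕ) :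
    PowerSeries.coeff (k + 1) (ratioSeries s ^ (i + 1)) =
      PowerSeries.coeff k (ratioSeries s ^ (i + 1)) +
        PowerSeries.coeff (k + 1) (ratioSeries s ^ i) -
          (1 - s) * PowerSeries.coeff k (ratioSeries s ^ i) := by
  have hrec : ratioSeries s ^ (i + 1) = PowerSeries.X * ratioSeries s ^ (i + 1) +
      ratioSeries s ^ i - PowerSeries.X * (PowerSeries.C (1 - s) * ratioSeries s ^ i) := by
    linear_combination ratioSeries s ^ i * one_sub_X_mul_ratioSeries s
  conv_lhs => rw [hrec]
  rw [map_sub, map_add, PowerSeries.coeff_succ_X_mul, PowerSeries.coeff_succ_X_mul,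
    PowerSeries.coeff_C_mul]

theorem coeff_succ_ratioSeries_pow (s : R) (i k : ℕ) :
    PowerSeries.coeff (k + 1) (ratioSeries s ^ i) =
      ((1 + C s * X) ^ i * (1 + X) ^ k : R[X]).coeff (k + 1) := by
  induction i generalizing k with
  | zero =>
    simp [PowerSeries.coeff_one, coeff_one_add_X_pow]
  | succ i ih =>
    induction k with
    | zero =>
      have hlinear (i : ℕ) : ((1 + C s * X) ^ i : R[X]).coeff 1 = s * i := by
        simpa using coeff_C_add_C_mul_X_pow 1 s i 1
      rw [coeff_succ_ratioSeries_pow_succ, coeff_zero_ratioSeries_pow, coeff_zero_ratioSeries_pow,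
        ih, pow_zero, mul_one, zero_add, hlinear, mul_one, mul_one, hlinear, Nat.cast_succ]
      ring
    | succ k ihk =>
      rw [coeff_succ_ratioSeries_pow_succ, ihk, ih, ih, ← coeff_C_mul, sub_eq_iff_eq_add,
        pow_succ _ i, pow_succ _ k]
      set A : R[X] := (1 + C s * X) ^ i * (1 + X) ^ k
      rw [show (1 + C s * X) ^ i * (1 + C s * X) * ((1 + X) ^ k * (1 + X)) =
          (A + C s * A * X) * (1 + X) by ring,
        show (1 + C s * X) ^ i * (1 + C s * X) * (1 + X) ^ k = A + C s * A * X by ring,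
        show (1 + C s * X) ^ i * ((1 + X) ^ k * (1 + X)) = A + A * X by ring]
      simp only [mul_add, mul_one, coeff_add, coeff_mul_X, coeff_C_mul]
      ring

end RatioSeries

/-! ### The factor of a letter -/

section BlockFactor

section Semiring

variable {R : Type*} [CommSemiring R]

/-- The product of `1 + keyForm s T v` over the positions `v` of a block `c` of size `k`. -/
noncomputable def blockFactor {r : ℕ} (s : R) (c : Fin r) : ℕ → MvPolynomial (Fin r) R
  | 0 => 1
  | k + 1 =>
    (1 + MvPolynomial.X c + MvPolynomial.C s * ∑ b ∈ Ioi c, MvPolynomial.X b) ^ k *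
      (1 + MvPolynomial.C s * ∑ b ∈ Ici c, MvPolynomial.X b)

theorem finSuccEquiv_C (r : ℕ) (s : R) :
    MvPolynomial.finSuccEquiv R r (MvPolynomial.C s) = C (MvPolynomial.C s) := by
  simp [MvPolynomial.finSuccEquiv_apply]

theorem finSuccEquiv_one_add_C_mul_sum_X (s : R) (r : ℕ) :
    MvPolynomial.finSuccEquiv R r (1 + MvPolynomial.C s * ∑ b, MvPolynomial.X b) =
      C (1 + MvPolynomial.C s * ∑ b, MvPolynomial.X b) + C (MvPolynomial.C s) * X := by
  simp only [map_add, map_one, map_mul, map_sum, Fin.sum_univ_succ,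
    MvPolynomial.finSuccEquiv_X_zero, MvPolynomial.finSuccEquiv_X_succ, finSuccEquiv_C]
  ring

theorem finSuccEquiv_blockFactor_succ {r : ℕ} (s : R) (c : Fin r) (k : ℕ) :
    MvPolynomial.finSuccEquiv R r (blockFactor s c.succ k) = C (blockFactor s c k) := by
  cases k with
  | zero => simp [blockFactor]
  | succ k =>
    simp only [blockFactor, ← Fin.map_succEmb_Ioi, ← Fin.map_succEmb_Ici, sum_map, Fin.coe_succEmb,
      map_mul, map_pow, map_add, map_one, map_sum, MvPolynomial.finSuccEquiv_X_succ, finSuccEquiv_C]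

theorem finSuccEquiv_blockFactor_zero (s : R) (r k : ℕ) :
    MvPolynomial.finSuccEquiv R r (blockFactor s 0 (k + 1)) =
      (C (1 + MvPolynomial.C s * ∑ b, MvPolynomial.X b) + X) ^ k *
        (C (1 + MvPolynomial.C s * ∑ b, MvPolynomial.X b) + C (MvPolynomial.C s) * X) := by
  have hIci : Ici (0 : Fin (r + 1)) = univ := Finset.ext fun x => by simp
  rw [blockFactor, map_mul, map_pow, hIci, finSuccEquiv_one_add_C_mul_sum_X, Fin.Ioi_zero_eq_map,
    sum_map]
  simp only [map_add, map_one, map_mul, map_sum, MvPolynomial.finSuccEquiv_X_zero, Fin.coe_succEmb,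
    MvPolynomial.finSuccEquiv_X_succ, finSuccEquiv_C, add_right_comm _ X]

end Semiring

variable {R : Type*} [CommRing R]

theorem coeff_pow_mul_prod_blockFactor (s : R) (i : ℕ) {r : ℕ} (a : Fin r →₀ ℕ) :
    MvPolynomial.coeff a ((1 + MvPolynomial.C s * ∑ b, MvPolynomial.X b) ^ i *
        ∏ c, blockFactor s c (a c)) =
      ∏ c, PowerSeries.coeff (a c) (ratioSeries s ^ (i + 1)) := by
  induction r with
  | zero => simp [Subsingleton.elim a 0]
  | succ r ih =>
    obtain ⟨k, a, rfl⟩ : ∃ k l, a = Finsupp.cons k l := ⟨a 0, a.tail, (Finsupp.cons_tail a).symm⟩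
    rw [← MvPolynomial.finSuccEquiv_coeff_coeff, Fin.prod_univ_succ, Fin.prod_univ_succ]
    simp only [Finsupp.cons_zero, Finsupp.cons_succ, map_mul, map_pow, map_prod,
      finSuccEquiv_one_add_C_mul_sum_X, finSuccEquiv_blockFactor_succ]
    rw [← ih a]
    set U : MvPolynomial (Fin r) R := 1 + MvPolynomial.C s * ∑ b, MvPolynomial.X b with hU
    cases k with
    | zero =>
      rw [blockFactor, map_one, one_mul, ← map_prod, coeff_mul_C, coeff_C_add_C_mul_X_pow,
        coeff_zero_ratioSeries_pow]
      simp
    | succ k =>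
      have hcoeff := coeff_C_add_X_pow_mul_pow U (MvPolynomial.C s) (i := i + 1) (k := k)
        (m := k + 1) (by lia)
      rw [finSuccEquiv_blockFactor_zero, ← hU, ← map_prod, ← mul_assoc, mul_left_comm, ← mul_assoc,
        mul_assoc ((C U + X) ^ k), ← pow_succ, mul_comm ((C U + X) ^ k), coeff_mul_C, hcoeff,
        show i + 1 + k - (k + 1) = i by lia, coeff_succ_ratioSeries_pow]
      have hmap : ((1 + C (MvPolynomial.C s) * X) ^ (i + 1) * (1 + X) ^ k :
            (MvPolynomial (Fin r) R)[X]).coeff (k + 1) =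
          MvPolynomial.C (((1 + C s * X) ^ (i + 1) * (1 + X) ^ k : R[X]).coeff (k + 1)) := by
        rw [← coeff_map]
        simp
      rw [hmap, mul_right_comm, mul_comm, MvPolynomial.coeff_C_mul]

end BlockFactor

/-! ### The generating function of the letters -/

section LetterSeries

section Semiring

variable {R : Type*} [CommSemiring R] {r : ℕ}

theorem prod_X_pow (a : Fin r →₀ ℕ) :
    ∏ c, (MvPolynomial.X c : MvPolynomial (Fin r) R) ^ a c = MvPolynomial.monomial a 1 := by
  rw [MvPolynomial.monomial_eq, map_one, one_mul, Finsupp.prod_fintype _ _ fun c => pow_zero _]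

theorem rescale_C {S : Type*} [CommSemiring S] (u v : S) :
    PowerSeries.rescale u (PowerSeries.C v) = PowerSeries.C v := by
  ext (_ | n)
  · simp
  · simp [PowerSeries.coeff_rescale]

theorem coeff_coeff_prod_rescale (f : Fin r → PowerSeries R) (a : Fin r →₀ ℕ) :
    MvPolynomial.coeff a (PowerSeries.coeff a.degree
        (∏ c, PowerSeries.rescale (MvPolynomial.X c) ((f c).map MvPolynomial.C))) =
      ∏ c, PowerSeries.coeff (a c) (f c) := by
  have hterm (l : Fin r →₀ ℕ) :
      MvPolynomial.coeff a (∏ c, PowerSeries.coeff (l c)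
          (PowerSeries.rescale (MvPolynomial.X c) ((f c).map MvPolynomial.C))) =
        if l = a then ∏ c, PowerSeries.coeff (a c) (f c) else 0 := by
    simp only [PowerSeries.coeff_rescale, PowerSeries.coeff_map, prod_mul_distrib, prod_X_pow,
      ← map_prod, mul_comm (MvPolynomial.monomial l _), MvPolynomial.coeff_C_mul,
      MvPolynomial.coeff_monomial, mul_ite, mul_one, mul_zero]
    split_ifs with hl
    · rw [hl]
    · rfl
  rw [PowerSeries.coeff_prod, MvPolynomial.coeff_sum, sum_congr rfl fun l _ => hterm l,
    sum_ite_eq_of_mem']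
  simp [mem_finsuppAntidiag, Finsupp.degree_eq_sum]

/-- The generating function `∏ c, (1 - (1 - s) x_c z) / (1 - x_c z)`, a power series in `z` whose
coefficients are polynomials in the letters `x_c`. -/
noncomputable def letterSeries (s : R) (r : ℕ) : PowerSeries (MvPolynomial (Fin r) R) :=
  ∏ c, PowerSeries.rescale (MvPolynomial.X c) ((ratioSeries s).map MvPolynomial.C)

end Semiring

variable {R : Type*} [CommRing R] {r : ℕ}

theorem prod_one_sub_mul_letterSeries (s : R) :
    (∏ c : Fin r, (1 - PowerSeries.C (MvPolynomial.X c) * PowerSeries.X)) * letterSeries s r =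
      ∏ c : Fin r, (1 - PowerSeries.C (MvPolynomial.C (1 - s)) *
        (PowerSeries.C (MvPolynomial.X c) * PowerSeries.X)) := by
  rw [letterSeries, ← prod_mul_distrib]
  refine prod_congr rfl fun c _ => ?_
  have hratio := congrArg (fun f => PowerSeries.rescale (MvPolynomial.X c)
    (f.map (MvPolynomial.C (σ := Fin r)))) (one_sub_X_mul_ratioSeries s)
  simpa only [map_mul, map_sub, map_one, PowerSeries.map_X, PowerSeries.map_C,
    PowerSeries.rescale_X, rescale_C] using hratio

theorem exists_letterSeries_eq (s : R) :
    ∃ Z, letterSeries s r = 1 + PowerSeries.C (MvPolynomial.C s) * (PowerSeries.X * Z) := by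
  suffices hdvd : PowerSeries.C (MvPolynomial.C s) * PowerSeries.X ∣ letterSeries s r - 1 by
    obtain ⟨Z, hZ⟩ := hdvd
    exact ⟨Z, by rw [← mul_assoc, ← hZ, add_sub_cancel]⟩
  refine prod_induction _ (fun f => PowerSeries.C (MvPolynomial.C s) * PowerSeries.X ∣ f - 1)
    (fun f g hf hg => ?_) (by simp) fun c _ => ?_
  · rw [show f * g - 1 = (f - 1) * g + (g - 1) by ring]
    exact dvd_add (hf.mul_right g) hg
  · simp only [ratioSeries, map_add, map_mul, map_one, PowerSeries.map_X, PowerSeries.map_C,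
      PowerSeries.rescale_X, rescale_C, add_sub_cancel_left]
    exact dvd_mul_of_dvd_left (mul_dvd_mul_left _ (dvd_mul_left _ _)) _

theorem coeff_letterSeries_pow_succ (s : R) (i : ℕ) (a : Fin r →₀ ℕ) :
    MvPolynomial.coeff a (PowerSeries.coeff a.degree (letterSeries s r ^ (i + 1))) =
      MvPolynomial.coeff a ((1 + MvPolynomial.C s * ∑ b, MvPolynomial.X b) ^ i *
        ∏ c, blockFactor s c (a c)) := by
  simp_rw [letterSeries, ← prod_pow, ← map_pow]
  rw [coeff_coeff_prod_rescale, coeff_pow_mul_prod_blockFactor]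

theorem coeff_letterSeries_mul_aeval (s : R) (g : R[X]) (a : Fin r →₀ ℕ) :
    MvPolynomial.coeff a (PowerSeries.coeff a.degree
        (letterSeries s r * aeval (letterSeries s r) g)) =
      MvPolynomial.coeff a (aeval (1 + MvPolynomial.C s * ∑ b, MvPolynomial.X b) g *
        ∏ c, blockFactor s c (a c)) := by
  induction g using Polynomial.induction_on' with
  | add g h hg hh => simp only [map_add, mul_add, add_mul, MvPolynomial.coeff_add, hg, hh]
  | monomial i x =>
    rw [aeval_monomial, aeval_monomial, PowerSeries.algebraMap_apply, MvPolynomial.algebraMap_eq,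
      mul_left_comm, ← pow_succ', mul_assoc, PowerSeries.coeff_C_mul, MvPolynomial.coeff_C_mul,
      MvPolynomial.coeff_C_mul, coeff_letterSeries_pow_succ]

theorem coeff_letterSeries_mul_pow [IsDomain R] {s : R} (hs : s ≠ 0)
    {Z : PowerSeries (MvPolynomial (Fin r) R)}
    (hZ : letterSeries s r = 1 + PowerSeries.C (MvPolynomial.C s) * Z) (j : ℕ) (a : Fin r →₀ ℕ) :
    MvPolynomial.coeff a (PowerSeries.coeff a.degree (letterSeries s r * Z ^ j)) =
      MvPolynomial.coeff a ((∑ b, MvPolynomial.X b) ^ j * ∏ c, blockFactor s c (a c)) := by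
  have haeval := coeff_letterSeries_mul_aeval s ((X - 1) ^ j) a
  rw [map_pow, map_pow, map_sub, map_sub, aeval_X, aeval_X, map_one, map_one, add_sub_cancel_left,
    sub_eq_of_eq_add' hZ, mul_pow, mul_pow, ← map_pow, ← map_pow, mul_left_comm,
    PowerSeries.coeff_C_mul, mul_assoc, MvPolynomial.coeff_C_mul, MvPolynomial.coeff_C_mul]
    at haeval
  exact mul_left_cancel₀ (pow_ne_zero j hs) haeval

theorem coeff_eq_sum_of_eq_letterSeries_mul [IsDomain R] {t : R} (ht : t ≠ 1)
    {G : PowerSeries (MvPolynomial (Fin r) R)}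
    (hG : G = letterSeries (1 - t) r *
      (PowerSeries.C (MvPolynomial.C t) * G + PowerSeries.C (MvPolynomial.C (1 - t))))
    (a : Fin r →₀ ℕ) {N : ℕ} (hN : a.degree < N) :
    MvPolynomial.coeff a (PowerSeries.coeff a.degree G) =
      ∑ j ∈ range N, t ^ j * MvPolynomial.coeff a ((∑ b, MvPolynomial.X b) ^ j *
        ∏ c, blockFactor (1 - t) c (a c)) := by
  have hs : 1 - t ≠ 0 := sub_ne_zero.mpr ht.symm
  obtain ⟨Z, hZ⟩ := exists_letterSeries_eq (r := r) (1 - t)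
  set τ : PowerSeries (MvPolynomial (Fin r) R) := PowerSeries.C (MvPolynomial.C t)
  have hsC : PowerSeries.C (MvPolynomial.C (1 - t)) = 1 - τ := by simp [τ]
  have hunroll : letterSeries (1 - t) r = (1 - τ * (PowerSeries.X * Z)) * G := by
    have hsC_ne : 1 - τ ≠ 0 := by
      rw [← hsC]
      exact (map_ne_zero_iff _ PowerSeries.C_injective).mpr
        ((map_ne_zero_iff _ (MvPolynomial.C_injective _ _)).mpr hs)
    refine mul_left_cancel₀ hsC_ne ?_
    rw [hsC] at hG hZ
    linear_combination -hG - G * τ * hZ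
  have hgeom : G = (∑ j ∈ range N, τ ^ j * (letterSeries (1 - t) r * (PowerSeries.X * Z) ^ j)) +
      PowerSeries.X ^ N * ((τ * Z) ^ N * G) := by
    have hsum := mul_neg_geom_sum (τ * (PowerSeries.X * Z)) N
    simp_rw [mul_left_comm _ (letterSeries (1 - t) r), ← mul_pow, ← mul_sum]
    rw [hunroll]
    linear_combination -G * hsum
  rw [hgeom, map_add, PowerSeries.coeff_X_pow_mul', if_neg hN.not_ge, add_zero, map_sum,
    MvPolynomial.coeff_sum]
  refine sum_congr rfl fun j _ => ?_
  rw [← coeff_letterSeries_mul_pow hs hZ, ← map_pow, ← map_pow, PowerSeries.coeff_C_mul,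
    MvPolynomial.coeff_C_mul]

end LetterSeries

/-! ### Words weighted by their descents -/

section DescentSet

variable {α : Type*} [LinearOrder α] {m : ℕ}

/-- The set of descent positions of the word `w`, numbered from `1`. -/
def descentSet (w : Fin (m + 1) → α) : Finset ℕ :=
  image (fun i : Fin m => (i : ℕ) + 1) {i | w i.succ < w i.castSucc}

theorem mem_descentSet {w : Fin (m + 1) → α} {j : ℕ} :
    j ∈ descentSet w ↔ ∃ i : Fin m, w i.succ < w i.castSucc ∧ (i : ℕ) + 1 = j := by
  simp [descentSet]

theorem zero_notMem_descentSet (w : Fin (m + 1) → α) : 0 ∉ descentSet w := by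
  simp [mem_descentSet]

theorem descentSet_cons (c : α) (u : Fin (m + 1) → α) :
    descentSet (Fin.cons c u : Fin (m + 2) → α) =
      if u 0 < c then insert 1 ((descentSet u).image (· + 1))
      else (descentSet u).image (· + 1) := by
  ext j
  have hmem : j ∈ (descentSet u).image (· + 1) ↔
      ∃ i : Fin m, u i.succ < u i.castSucc ∧ (i : ℕ) + 2 = j := by
    simp [descentSet]
  have hcons : j ∈ descentSet (Fin.cons c u : Fin (m + 2) → α) ↔
      u 0 < c ∧ 1 = j ∨ j ∈ (descentSet u).image (· + 1) := by
    rw [mem_descentSet, Fin.exists_fin_succ, hmem]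
    simp only [Fin.castSucc_zero, Fin.cons_zero, ← Fin.succ_castSucc, Fin.cons_succ, Fin.val_zero,
      Fin.val_succ, zero_add]
  rw [hcons]
  split_ifs with h <;> simp [h, eq_comm]

end DescentSet

section GammaWeight

variable {R : Type*} [CommSemiring R] {m : ℕ} {D : Finset ℕ}

/-- The term `t ^ k * (1 + t) ^ (m - 2 * k)` of the `γ`-expansion to which a permutation of
`m + 1` letters with descent set `D`, `k = |D|`, contributes; `0` if it contributes to none. -/
def gammaWeight (t : R) (m : ℕ) (D : Finset ℕ) : R :=
  if D ⊆ Icc 1 (m - 1) ∧ NoTwoConsec D then t ^ #D * (1 + t) ^ (m - 2 * #D) else 0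

theorem NoTwoConsec.two_mul_card_le (hD : NoTwoConsec D) (hsub : D ⊆ Icc 1 (m - 1)) :
    2 * #D ≤ m := by
  have hdisj : Disjoint D (D.image (· + 1)) := by
    rw [disjoint_right]
    simpa [NoTwoConsec] using hD
  have hunion : D ∪ D.image (· + 1) ⊆ Icc 1 m := by
    intro j hj
    simp only [mem_union, mem_image] at hj
    rcases hj with hj | ⟨i, hi, rfl⟩
    · have := mem_Icc.mp (hsub hj)
      exact mem_Icc.mpr (by lia)
    · have := mem_Icc.mp (hsub hi)
      exact mem_Icc.mpr (by lia)
  have hcard := card_le_card hunion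
  rw [card_union_of_disjoint hdisj, card_image_of_injective _ (add_left_injective 1),
    Nat.card_Icc] at hcard
  lia

theorem gammaWeight_image_succ (t : R) (hD : 0 ∉ D) :
    gammaWeight t (m + 1) (D.image (· + 1)) = (1 + t) * gammaWeight t m D := by
  have hsub : D.image (· + 1) ⊆ Icc 1 m ↔ D ⊆ Icc 1 (m - 1) := by
    rw [image_subset_iff, subset_iff]
    simp only [mem_Icc]
    refine forall₂_congr fun i hi => ?_
    have : i ≠ 0 := ne_of_mem_of_not_mem hi hD
    lia
  have hconsec : NoTwoConsec (D.image (· + 1)) ↔ NoTwoConsec D := by simp [NoTwoConsec]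
  simp only [gammaWeight, Nat.add_sub_cancel, hsub, hconsec,
    card_image_of_injective _ (add_left_injective 1)]
  split_ifs with hadm
  · have := hadm.2.two_mul_card_le hadm.1
    rw [Nat.succ_sub this, pow_succ]
    ring
  · rw [mul_zero]

theorem gammaWeight_insert_one (t : R) (hD : 0 ∉ D) :
    gammaWeight t (m + 2) (insert 1 (D.image (· + 2))) = t * gammaWeight t m D := by
  have hsub : insert 1 (D.image (· + 2)) ⊆ Icc 1 (m + 1) ↔ D ⊆ Icc 1 (m - 1) := by
    rw [insert_subset_iff, image_subset_iff, subset_iff]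
    simp only [mem_Icc]
    refine (and_iff_right (by lia)).trans (forall₂_congr fun i hi => ?_)
    have : i ≠ 0 := ne_of_mem_of_not_mem hi hD
    lia
  have hconsec : NoTwoConsec (insert 1 (D.image (· + 2))) ↔ NoTwoConsec D := by
    simp [NoTwoConsec, hD]
  have hone : 1 ∉ D.image (· + 2) := by simp
  simp only [gammaWeight, show m + 2 - 1 = m + 1 from rfl, hsub, hconsec,
    card_insert_of_notMem hone, card_image_of_injective _ (add_left_injective 2)]
  split_ifs with hadm
  · rw [show m + 2 - 2 * (#D + 1) = m - 2 * #D by lia, pow_succ]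
    ring
  · rw [mul_zero]

theorem gammaWeight_eq_zero_of_consec (t : R) {i : ℕ} (hi : i ∈ D) (hi' : i + 1 ∈ D) :
    gammaWeight t m D = 0 :=
  if_neg fun hadm => hadm.2 i hi hi'

theorem gammaWeight_one_singleton (t : R) : gammaWeight t 1 {1} = 0 := by
  simp [gammaWeight]

theorem gammaWeight_zero_empty (t : R) : gammaWeight t 0 ∅ = 1 := by
  simp [gammaWeight, NoTwoConsec]

end GammaWeight

section Words

variable {R : Type*} [CommSemiring R] {r m : ℕ}

/-- The monomial of the word `w`, weighted by `gammaWeight` of its descent set. -/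
noncomputable def wordTerm (t : R) (w : Fin (m + 1) → Fin r) : MvPolynomial (Fin r) R :=
  MvPolynomial.C (gammaWeight t m (descentSet w)) * ∏ i, MvPolynomial.X (w i)

theorem wordTerm_cons_of_le (t : R) {c : Fin r} {u : Fin (m + 1) → Fin r} (hc : c ≤ u 0) :
    wordTerm t (Fin.cons c u : Fin (m + 2) → Fin r) =
      MvPolynomial.X c * ((1 + MvPolynomial.C t) * wordTerm t u) := by
  rw [wordTerm, wordTerm, descentSet_cons, if_neg hc.not_gt,
    gammaWeight_image_succ t (zero_notMem_descentSet u), Fin.prod_univ_succ, map_mul, map_add,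
    map_one]
  simp only [Fin.cons_zero, Fin.cons_succ]
  ring

theorem wordTerm_cons_cons (t : R) {c b : Fin r} (hbc : b < c) (u : Fin (m + 1) → Fin r) :
    wordTerm t (Fin.cons c (Fin.cons b u : Fin (m + 2) → Fin r) : Fin (m + 3) → Fin r) =
      if b ≤ u 0 then
        MvPolynomial.X c * (MvPolynomial.C t * (MvPolynomial.X b * wordTerm t u)) else 0 := by
  rw [wordTerm, descentSet_cons, Fin.cons_zero, if_pos hbc, descentSet_cons]
  split_ifs with h h' h'
  · exact absurd h' h.not_ge
  · rw [gammaWeight_eq_zero_of_consec t (i := 1) (by simp) (by simp), map_zero, zero_mul]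
  · rw [image_image, show (fun i => i + 1) ∘ (fun i => i + 1) = fun i : ℕ => i + 2 from rfl,
      gammaWeight_insert_one t (zero_notMem_descentSet u), Fin.prod_univ_succ, Fin.prod_univ_succ,
      wordTerm, map_mul]
    simp only [Fin.cons_zero, Fin.cons_succ]
    ring
  · exact absurd (not_lt.mp h) h'

theorem wordTerm_pair (t : R) {c b : Fin r} (hbc : b < c) (u : Fin 0 → Fin r) :
    wordTerm t (Fin.cons c (Fin.cons b u : Fin 1 → Fin r) : Fin 2 → Fin r) = 0 := by
  rw [wordTerm, descentSet_cons, Fin.cons_zero, if_pos hbc]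
  simp [descentSet, gammaWeight_one_singleton]

theorem sum_fun_succ {α M : Type*} [Fintype α] [AddCommMonoid M] {n : ℕ}
    (f : (Fin (n + 1) → α) → M) : ∑ u, f u = ∑ b, ∑ u : Fin n → α, f (Fin.cons b u) := by
  rw [← (Fin.consEquiv fun _ => α).sum_comp, Fintype.sum_prod_type]
  rfl

/-- The weighted sum of the words of length `n` that begin with the letter `c`. -/
noncomputable def startSum (t : R) (c : Fin r) : ℕ → MvPolynomial (Fin r) R
  | 0 => 0
  | n + 1 => ∑ u : Fin n → Fin r, wordTerm t (Fin.cons c u : Fin (n + 1) → Fin r)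

theorem sum_wordTerm (t : R) (m r : ℕ) :
    ∑ w : Fin (m + 1) → Fin r, wordTerm t w = ∑ c, startSum t c (m + 1) :=
  sum_fun_succ _

theorem startSum_one (t : R) (c : Fin r) : startSum t c 1 = MvPolynomial.X c := by
  simp [startSum, wordTerm, descentSet, gammaWeight_zero_empty]

theorem sum_wordTerm_cons_cons_of_lt (t : R) {c b : Fin r} (hbc : b < c) (n : ℕ) :
    ∑ u : Fin n → Fin r,
        wordTerm t (Fin.cons c (Fin.cons b u : Fin (n + 1) → Fin r) : Fin (n + 2) → Fin r) =
      MvPolynomial.X c * (MvPolynomial.C t * (MvPolynomial.X b * ∑ d ∈ Ici b, startSum t d n)) := by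
  cases n with
  | zero => simp [wordTerm_pair t hbc, startSum]
  | succ n =>
    have hIci : Ici b = ({d | b ≤ d} : Finset (Fin r)) := by ext; simp
    rw [sum_fun_succ, hIci, sum_filter, mul_sum, mul_sum, mul_sum]
    refine sum_congr rfl fun d _ => ?_
    simp only [wordTerm_cons_cons t hbc, Fin.cons_zero, startSum]
    split_ifs <;> simp [mul_sum]

theorem startSum_add_two (t : R) (c : Fin r) (n : ℕ) :
    startSum t c (n + 2) = MvPolynomial.X c *
      ((1 + MvPolynomial.C t) * ∑ b ∈ Ici c, startSum t b (n + 1) +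
        MvPolynomial.C t * ∑ b ∈ Iio c, MvPolynomial.X b * ∑ d ∈ Ici b, startSum t d n) := by
  have hge (b : Fin r) (hb : b ∈ Ici c) :
      ∑ u : Fin n → Fin r,
          wordTerm t (Fin.cons c (Fin.cons b u : Fin (n + 1) → Fin r) : Fin (n + 2) → Fin r) =
        MvPolynomial.X c * ((1 + MvPolynomial.C t) * startSum t b (n + 1)) := by
    rw [startSum, mul_sum, mul_sum]
    exact sum_congr rfl fun u _ => wordTerm_cons_of_le t (mem_Ici.mp hb)
  have huniv : (univ : Finset (Fin r)) = Ici c ∪ Iio c := by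
    ext b
    simp [le_or_gt]
  have hdisj : Disjoint (Ici c) (Iio c) :=
    disjoint_left.mpr fun b hb hb' => (mem_Iio.mp hb').not_ge (mem_Ici.mp hb)
  rw [startSum, sum_fun_succ, huniv, sum_union hdisj, sum_congr rfl hge,
    sum_congr rfl fun b hb => sum_wordTerm_cons_cons_of_lt t (mem_Iio.mp hb) n]
  simp only [mul_add, mul_sum]

end Words

section WordSeries

theorem eq_prod_mul_of_succ {S : Type*} [CommRing S] {r : ℕ} {y : Fin r → S} {P : Fin (r + 1) → S}
    (hP : ∀ k, P k.succ = (1 - y k) * P k.castSucc) :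
    P (Fin.last r) = (∏ k, (1 - y k)) * P 0 := by
  induction r with
  | zero => simp
  | succ r ih =>
    rw [← Fin.succ_last, hP, Fin.prod_univ_castSucc, mul_right_comm, mul_comm, ← Fin.castSucc_zero,
      ← ih (P := fun k => P k.castSucc) fun k => hP k.castSucc]

-- With `T k = ∑_{b ≥ k} v b` and `K k = ∑_{b < k} y b * T b`, both `T k + 1 + t * K k` and
-- `t * T k + 1 + t * K k` pick up one factor at each step `k ↦ k + 1`, and they agree at the end,
-- where `T` vanishes.
theorem prod_one_sub_mul_one_add_sum {S : Type*} [CommRing S] {r : ℕ} (t : S) {y v : Fin r → S}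
    (hv : ∀ c, v c = y c * (1 + (1 + t) * ∑ b ∈ Ici c, v b +
      t * ∑ b ∈ Iio c, y b * ∑ d ∈ Ici b, v d)) :
    (∏ c, (1 - y c)) * (1 + ∑ c, v c) = (∏ c, (1 - t * y c)) * (1 + t * ∑ c, v c) := by
  set T : Fin (r + 1) → S := fun k => ∑ b with k ≤ b.castSucc, v b
  set K : Fin (r + 1) → S := fun k => ∑ b with b.castSucc < k, y b * ∑ d ∈ Ici b, v d
  have hTcastSucc (c : Fin r) : T c.castSucc = ∑ b ∈ Ici c, v b := by
    refine sum_congr (Finset.ext fun b => ?_) fun _ _ => rfl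
    simp
  have hTsucc (c : Fin r) : T c.castSucc = v c + T c.succ := by
    rw [hTcastSucc, ← add_sum_Ioi_eq_sum_Ici]
    refine congrArg (v c + ·) (sum_congr (Finset.ext fun b => ?_) fun _ _ => rfl)
    simp [Fin.succ_le_castSucc_iff]
  have hKcastSucc (c : Fin r) : K c.castSucc = ∑ b ∈ Iio c, y b * ∑ d ∈ Ici b, v d := by
    refine sum_congr (Finset.ext fun b => ?_) fun _ _ => rfl
    simp
  have hKsucc (c : Fin r) : K c.succ = K c.castSucc + y c * T c.castSucc := by
    rw [hKcastSucc, hTcastSucc, sum_Iio_add_eq_sum_Iic (f := fun b => y b * ∑ d ∈ Ici b, v d)]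
    refine sum_congr (Finset.ext fun b => ?_) fun _ _ => rfl
    simp [Fin.castSucc_lt_succ_iff]
  have hvT (c : Fin r) : v c = y c * (1 + (1 + t) * T c.castSucc + t * K c.castSucc) := by
    rw [hTcastSucc, hKcastSucc, ← hv]
  have hone := eq_prod_mul_of_succ (y := y) (P := fun k => T k + 1 + t * K k) fun c => by
    linear_combination -hTsucc c + t * hKsucc c - hvT c
  have ht := eq_prod_mul_of_succ (y := fun c => t * y c) (P := fun k => t * T k + 1 + t * K k)
    fun c => by linear_combination -t * hTsucc c + t * hKsucc c - t * hvT c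
  have hTlast : T (Fin.last r) = 0 := by simp [T]
  have hTzero : T 0 = ∑ c, v c := by simp [T]
  have hKzero : K 0 = 0 := by simp [K]
  simp only [hTlast, hTzero, hKzero, mul_zero, add_zero, zero_add] at hone ht
  rw [add_comm 1, ← hone, ht, add_comm 1]

section Semiring

variable {R : Type*} [CommSemiring R]

/-- The generating function, by length, of all words weighted by `gammaWeight`; the empty word
counts `1`. -/
noncomputable def wordSeries (t : R) (r : ℕ) : PowerSeries (MvPolynomial (Fin r) R) :=
  1 + ∑ c, PowerSeries.mk (startSum t c)

theorem coeff_succ_wordSeries (t : R) (r m : ℕ) :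
    PowerSeries.coeff (m + 1) (wordSeries t r) = ∑ w : Fin (m + 1) → Fin r, wordTerm t w := by
  simp [wordSeries, PowerSeries.coeff_one, sum_wordTerm]

theorem mk_startSum (t : R) {r : ℕ} (c : Fin r) :
    PowerSeries.mk (startSum t c) = PowerSeries.C (MvPolynomial.X c) * PowerSeries.X *
      (1 + (1 + PowerSeries.C (MvPolynomial.C t)) * ∑ b ∈ Ici c, PowerSeries.mk (startSum t b) +
        PowerSeries.C (MvPolynomial.C t) * ∑ b ∈ Iio c, PowerSeries.C (MvPolynomial.X b) *
          PowerSeries.X * ∑ d ∈ Ici b, PowerSeries.mk (startSum t d)) := by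
  ext1 n
  simp only [mul_assoc, add_mul, one_mul, PowerSeries.coeff_C_mul, PowerSeries.coeff_mk]
  match n with
  | 0 => simp [startSum]
  | 1 =>
    rw [startSum_one]
    simp [startSum]
  | n + 2 =>
    simp [startSum_add_two, PowerSeries.coeff_succ_X_mul, PowerSeries.coeff_C_mul,
      PowerSeries.coeff_one, add_mul]

end Semiring

variable {R : Type*} [CommRing R]

theorem wordSeries_eq_letterSeries_mul (t : R) (r : ℕ) :
    wordSeries t r = letterSeries (1 - t) r *
      (PowerSeries.C (MvPolynomial.C t) * wordSeries t r +
        PowerSeries.C (MvPolynomial.C (1 - t))) := by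
  have htelescope := prod_one_sub_mul_one_add_sum (PowerSeries.C (MvPolynomial.C t))
    (mk_startSum t (r := r))
  have hletter := prod_one_sub_mul_letterSeries (r := r) (1 - t)
  rw [sub_sub_cancel] at hletter
  have hlinear : (1 + PowerSeries.C (MvPolynomial.C t) * ∑ c, PowerSeries.mk (startSum t c) :
      PowerSeries (MvPolynomial (Fin r) R)) =
      PowerSeries.C (MvPolynomial.C t) * wordSeries t r +
        PowerSeries.C (MvPolynomial.C (1 - t)) := by
    rw [wordSeries, map_sub, map_sub, map_one, map_one]
    ring
  rw [← wordSeries, hlinear, ← hletter, mul_assoc] at htelescope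
  refine IsUnit.mul_left_cancel ?_ htelescope
  rw [PowerSeries.isUnit_iff_constantCoeff]
  simp [map_prod]

theorem coeff_sum_wordTerm [IsDomain R] {t : R} (ht : t ≠ 1) {r m : ℕ} {a : Fin r →₀ ℕ}
    (ha : a.degree = m + 1) :
    MvPolynomial.coeff a (∑ w : Fin (m + 1) → Fin r, wordTerm t w) =
      ∑ j ∈ range (m + 2), t ^ j * MvPolynomial.coeff a ((∑ b, MvPolynomial.X b) ^ j *
        ∏ c, blockFactor (1 - t) c (a c)) := by
  rw [← coeff_succ_wordSeries, ← ha]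
  exact coeff_eq_sum_of_eq_letterSeries_mul ht (wordSeries_eq_letterSeries_mul t r) a (by lia)

end WordSeries

/-! ### Permutation statistics and the set `DEX` -/

section PermStatistics

theorem pval_val_add_one {n : ℕ} (σ : Equiv.Perm (Fin n)) (i : Fin n) :
    pval σ (i + 1) = (σ i : ℕ) + 1 := by
  rw [pval, dif_pos (by lia)]
  rfl

theorem pexc_eq_card {n : ℕ} (σ : Equiv.Perm (Fin n)) : pexc σ = #{i | i < σ i} := by
  have himage : ({i ∈ Icc 1 n | i < pval σ i} : Finset ℕ) =
      image (fun i : Fin n => (i : ℕ) + 1) {i | i < σ i} := by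
    ext j
    simp only [mem_filter, mem_Icc, mem_image, mem_univ, true_and]
    constructor
    · rintro ⟨hj, hlt⟩
      obtain ⟨i, rfl⟩ : ∃ i : Fin n, (i : ℕ) + 1 = j := ⟨⟨j - 1, by lia⟩, by simp; lia⟩
      rw [pval_val_add_one] at hlt
      exact ⟨i, by lia, rfl⟩
    · rintro ⟨i, hi, rfl⟩
      rw [pval_val_add_one]
      lia
  rw [pexc, himage, card_image_of_injective]
  exact fun i j hij => Fin.ext (Nat.succ_injective hij)

variable {m : ℕ}

theorem pDES_eq_descentSet (σ : Equiv.Perm (Fin (m + 1))) : pDES σ = descentSet σ := by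
  have hpos (i : Fin m) : pval σ (i + 1 + 1) < pval σ (i + 1) ↔ σ i.succ < σ i.castSucc := by
    have hsucc := pval_val_add_one σ i.succ
    have hcast := pval_val_add_one σ i.castSucc
    simp only [Fin.val_succ, Fin.val_castSucc] at hsucc hcast
    rw [hsucc, hcast]
    lia
  ext j
  simp only [pDES, mem_filter, mem_Icc, mem_descentSet, Nat.add_sub_cancel]
  constructor
  · rintro ⟨hj, hlt⟩
    obtain ⟨i, rfl⟩ : ∃ i : Fin m, (i : ℕ) + 1 = j := ⟨⟨j - 1, by lia⟩, by simp; lia⟩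
    exact ⟨i, (hpos i).mp hlt, rfl⟩
  · rintro ⟨i, hlt, rfl⟩
    exact ⟨by lia, (hpos i).mpr hlt⟩

theorem sum_descentSet {α M : Type*} [LinearOrder α] [AddCommMonoid M] (w : Fin (m + 1) → α)
    (φ : ℕ → M) :
    ∑ j ∈ descentSet w, φ j = ∑ i : Fin m, if w i.succ < w i.castSucc then φ (i + 1) else 0 := by
  rw [descentSet, sum_image fun i _ j _ hij => Fin.ext (Nat.succ_injective hij), sum_filter]

/-- The word of `σ` in which every letter is preceded by the flag recording that it is not an
excedance, so that excedance letters are smaller than all others. -/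
def flaggedWord (σ : Equiv.Perm (Fin (m + 1))) (i : Fin (m + 1)) : Bool ×ₗ Fin (m + 1) :=
  toLex (decide (σ i ≤ i), σ i)

/-- The set `DEX(σ)` of Shareshian and Wachs. -/
def dexSet (σ : Equiv.Perm (Fin (m + 1))) : Finset ℕ := descentSet (flaggedWord σ)

theorem sum_dexSet_add_sum_excedances {M : Type*} [AddCommMonoid M] (σ : Equiv.Perm (Fin (m + 1)))
    {φ : ℕ → M} (hφ : φ 0 = 0) :
    ∑ j ∈ dexSet σ, φ j + ∑ i with i < σ i, φ (i + 1) =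
      ∑ j ∈ descentSet σ, φ j + ∑ i with i < σ i, φ i := by
  have hlast : ¬Fin.last m < σ (Fin.last m) := (Fin.le_last _).not_gt
  rw [dexSet, sum_descentSet, sum_descentSet, sum_filter, sum_filter, Fin.sum_univ_castSucc,
    if_neg hlast, add_zero, ← sum_add_distrib, Fin.sum_univ_succ (n := m), Fin.val_zero, hφ,
    ite_self, zero_add, ← sum_add_distrib]
  refine sum_congr rfl fun i _ => ?_
  have hne : σ i.castSucc ≠ σ i.succ := σ.injective.ne Fin.castSucc_lt_succ.ne
  simp only [flaggedWord, Prod.Lex.toLex_lt_toLex, Bool.lt_iff, decide_eq_false_iff_not,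
    decide_eq_true_eq, decide_eq_decide, Fin.val_succ, Fin.val_castSucc, Fin.lt_def, Fin.le_def]
  have := Fin.val_ne_of_ne hne
  split_ifs <;> first | (exfalso; lia) | simp

theorem sum_dexSet (σ : Equiv.Perm (Fin (m + 1))) : ∑ j ∈ dexSet σ, j = pmaj σ - pexc σ := by
  have h := sum_dexSet_add_sum_excedances σ (φ := id) rfl
  simp only [id, sum_add_distrib, ← card_eq_sum_ones, ← pexc_eq_card, ← pDES_eq_descentSet] at h
  rw [pmaj]
  lia

theorem card_dexSet (σ : Equiv.Perm (Fin (m + 1))) : #(dexSet σ) = pdesStar σ := by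
  have hcard {S : Finset ℕ} (hS : 0 ∉ S) : ∑ j ∈ S, (if j = 0 then 0 else 1) = #S := by
    rw [card_eq_sum_ones]
    exact sum_congr rfl fun j hj => if_neg (ne_of_mem_of_not_mem hj hS)
  have h := sum_dexSet_add_sum_excedances σ (φ := fun j => if j = 0 then 0 else 1) rfl
  rw [hcard (zero_notMem_descentSet σ), dexSet, hcard (zero_notMem_descentSet _), ← dexSet,
    sum_filter, sum_filter, Fin.sum_univ_succ, Fin.sum_univ_succ (n := m)] at h
  have hfirst : pval σ 1 = 1 ↔ ¬0 < σ 0 := by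
    have := pval_val_add_one σ 0
    simp only [Fin.val_zero, zero_add] at this
    rw [this]
    lia
  rw [pdesStar, pdes, pDES_eq_descentSet]
  simp only [hfirst]
  simp only [Fin.val_succ, Nat.add_eq_zero_iff, one_ne_zero, and_false, if_false, Fin.val_zero,
    if_true, ite_self, zero_add] at h
  split_ifs at h ⊢ <;> lia

theorem sum_mul_gammaWeight {ι R : Type*} [Fintype ι] [CommSemiring R] (t : R) (D : ι → Finset ℕ)
    (f : ι → R) :
    ∑ i, f i * gammaWeight t m (D i) =
      ∑ k ∈ range (m / 2 + 1),
        (∑ i with D i ⊆ Icc 1 (m - 1) ∧ NoTwoConsec (D i) ∧ #(D i) = k, f i) *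
          t ^ k * (1 + t) ^ (m - 2 * k) := by
  simp only [gammaWeight, mul_ite, mul_zero]
  rw [← sum_filter, ← sum_fiberwise_of_maps_to (t := range (m / 2 + 1)) (g := fun i => #(D i))]
  · refine sum_congr rfl fun k _ => ?_
    simp only [sum_mul, filter_filter, and_assoc]
    refine sum_congr rfl fun i hi => ?_
    rw [(mem_filter.mp hi).2.2.2, mul_assoc]
  · intro i hi
    have hadm := (mem_filter.mp hi).2
    have := hadm.2.two_mul_card_le hadm.1
    exact mem_range.mpr (by lia)

end PermStatistics

/-! ### Sorting words and keys -/

section LetterCount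

variable {ι α : Type*} [Fintype ι]

/-- How often each letter occurs in the word `w`. -/
noncomputable def letterCount (w : ι → α) : α →₀ ℕ := ∑ i, Finsupp.single (w i) 1

theorem letterCount_comp_perm (w : ι → α) (e : Equiv.Perm ι) :
    letterCount (w ∘ e) = letterCount w :=
  Equiv.sum_comp e fun i => Finsupp.single (w i) 1

theorem degree_letterCount (w : ι → α) : (letterCount w).degree = Fintype.card ι := by
  simp [letterCount, map_sum]

theorem letterCount_apply [DecidableEq α] (w : ι → α) (c : α) :
    letterCount w c = #{i | w i = c} := by
  rw [letterCount, Finsupp.finsetSum_apply, card_filter]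
  exact sum_congr rfl fun i _ => Finsupp.single_apply

theorem coeff_prod_X {R : Type*} [CommSemiring R] [DecidableEq α] (w : ι → α) (a : α →₀ ℕ) :
    MvPolynomial.coeff a (∏ i, MvPolynomial.X (w i) : MvPolynomial α R) =
      if letterCount w = a then 1 else 0 := by
  have hmonomial : (∏ i, MvPolynomial.X (w i) : MvPolynomial α R) =
      MvPolynomial.monomial (letterCount w) 1 :=
    (MvPolynomial.monomial_sum_one _ _).symm
  rw [hmonomial, MvPolynomial.coeff_monomial]

variable [LinearOrder α] {n : ℕ}

theorem eq_of_monotone_of_letterCount_eq {f g : Fin n → α} (hf : Monotone f) (hg : Monotone g)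
    (hfg : letterCount f = letterCount g) : f = g := by
  have hlist (f : Fin n → α) : Finsupp.toMultiset (letterCount f) = List.ofFn f := by
    simp only [letterCount, map_sum, Finsupp.toMultiset_single, one_smul]
    rw [← Fin.univ_val_map, ← Multiset.sum_map_singleton (Multiset.map f _), Multiset.map_map]
    rfl
  have hperm := hlist f
  rw [hfg, hlist g, Multiset.coe_eq_coe] at hperm
  exact List.ofFn_injective (hperm.symm.eq_of_sortedLE hf.sortedLE_ofFn hg.sortedLE_ofFn)

theorem comp_sort_eq_of_letterCount_eq {w f : Fin n → α} (hf : Monotone f)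
    (hw : letterCount w = letterCount f) : w ∘ Tuple.sort w = f :=
  eq_of_monotone_of_letterCount_eq (Tuple.monotone_sort w) hf
    ((letterCount_comp_perm w _).trans hw)

theorem eq_sort_iff_strictMono_toLex {f : Fin n → α} {σ : Equiv.Perm (Fin n)} :
    σ = Tuple.sort f ↔ StrictMono fun i => toLex (f (σ i), σ i) :=
  Tuple.eq_sort_iff'

end LetterCount

section Blocks

variable {m : ℕ} {T : Finset ℕ}

/-- Cutting `0, …, m` in front of every `j ∈ T`, the number of the block containing `i`. -/
def blockIndex (T : Finset ℕ) (i : Fin (m + 1)) : Fin (m + 1) :=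
  ⟨#(T ∩ Icc 1 i), by
    have := card_le_card (inter_subset_right (s₁ := T) (s₂ := Icc 1 (i : ℕ)))
    rw [Nat.card_Icc] at this
    lia⟩

theorem monotone_blockIndex : Monotone (blockIndex T : Fin (m + 1) → Fin (m + 1)) :=
  fun _ _ hij => Fin.le_def.mpr <|
    card_le_card (inter_subset_inter_left (Icc_subset_Icc_right (Fin.le_def.mp hij)))

theorem val_blockIndex_succ (i : Fin m) :
    (blockIndex T i.succ : ℕ) = blockIndex T i.castSucc + if (i : ℕ) + 1 ∈ T then 1 else 0 := by
  simp only [blockIndex, Fin.val_succ, Fin.val_castSucc]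
  rw [← insert_Icc_right_eq_Icc_add_one (by lia)]
  split_ifs with h
  · rw [inter_insert_of_mem h, card_insert_of_notMem (by simp)]
  · rw [inter_insert_of_notMem h, add_zero]

theorem blockIndex_castSucc_lt_succ_iff {i : Fin m} :
    blockIndex T i.castSucc < blockIndex T i.succ ↔ (i : ℕ) + 1 ∈ T := by
  rw [Fin.lt_def, val_blockIndex_succ]
  split_ifs with h <;> simp [h]

theorem exists_le_blockIndex_of_lt {v b : Fin (m + 1)} (hb : b < blockIndex T v) :
    ∃ u < v, b ≤ blockIndex T u := by
  induction v using Fin.cases with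
  | zero => simp [blockIndex] at hb
  | succ i =>
    refine ⟨i.castSucc, Fin.castSucc_lt_succ, ?_⟩
    rw [Fin.lt_def, val_blockIndex_succ] at hb
    rw [Fin.le_def]
    split_ifs at hb <;> lia

theorem descentSet_subset_iff {α : Type*} [LinearOrder α] {w : Fin (m + 1) → α}
    (hw : Function.Injective w) :
    descentSet w ⊆ T ↔ StrictMono fun i => toLex (blockIndex T i, w i) := by
  simp only [subset_iff, mem_descentSet, forall_exists_index, and_imp]
  rw [Fin.strictMono_iff_lt_succ, forall_comm]
  refine forall_congr' fun i => ?_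
  have hne : w i.castSucc ≠ w i.succ := hw.ne Fin.castSucc_lt_succ.ne
  have heq : blockIndex T i.castSucc = blockIndex T i.succ ↔ (i : ℕ) + 1 ∉ T := by
    rw [← blockIndex_castSucc_lt_succ_iff, not_lt]
    exact ⟨ge_of_eq, (monotone_blockIndex Fin.castSucc_lt_succ.le).antisymm⟩
  simp only [Prod.Lex.toLex_lt_toLex, blockIndex_castSucc_lt_succ_iff, heq]
  grind

theorem descentSet_inv_subset_iff {σ : Equiv.Perm (Fin (m + 1))} :
    descentSet ⇑σ⁻¹ ⊆ T ↔ σ⁻¹ = Tuple.sort (blockIndex T ∘ σ) := by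
  rw [descentSet_subset_iff σ⁻¹.injective, eq_sort_iff_strictMono_toLex]
  simp

theorem descentSet_blockIndex_comp {σ : Equiv.Perm (Fin (m + 1))} (hσ : descentSet ⇑σ⁻¹ ⊆ T) :
    descentSet (blockIndex T ∘ σ) = descentSet σ := by
  rw [descentSet_subset_iff σ⁻¹.injective] at hσ
  have hlt (i : Fin m) : blockIndex T (σ i.succ) < blockIndex T (σ i.castSucc) ↔
      σ i.succ < σ i.castSucc := by
    refine ⟨monotone_blockIndex.reflect_lt, fun h => ?_⟩
    have := hσ h
    simp only [Equiv.Perm.coe_inv, Equiv.symm_apply_apply, Prod.Lex.toLex_lt_toLex] at this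
    exact this.resolve_right fun h' => h'.2.not_gt Fin.castSucc_lt_succ
  simp only [descentSet, Function.comp_apply, hlt]

theorem sum_descentSet_inv_subset {M : Type*} [AddCommMonoid M] (f : Finset ℕ → M) :
    ∑ σ : Equiv.Perm (Fin (m + 1)) with
        descentSet (σ⁻¹ : Equiv.Perm (Fin (m + 1))) ⊆ T, f (descentSet σ) =
      ∑ w : Fin (m + 1) → Fin (m + 1) with letterCount w = letterCount (blockIndex T),
        f (descentSet w) := by
  refine sum_bij' (fun σ _ => blockIndex T ∘ σ) (fun w _ => (Tuple.sort w)⁻¹) ?_ ?_ ?_ ?_ ?_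
  · intro σ _
    exact mem_filter.mpr ⟨mem_univ _, letterCount_comp_perm _ σ⟩
  · intro w hw
    have hsort := comp_sort_eq_of_letterCount_eq monotone_blockIndex (mem_filter.mp hw).2
    rw [mem_filter, descentSet_inv_subset_iff, ← hsort, Function.comp_assoc]
    simp
  · intro σ hσ
    rw [← descentSet_inv_subset_iff.mp (mem_filter.mp hσ).2, inv_inv]
  · intro w hw
    rw [← comp_sort_eq_of_letterCount_eq monotone_blockIndex (mem_filter.mp hw).2]
    ext i
    simp
  · intro σ hσ
    rw [descentSet_blockIndex_comp (mem_filter.mp hσ).2]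

end Blocks

section Keys

variable {m : ℕ} {T : Finset ℕ}

/-- Sorting the values of `σ` by these keys recovers `σ` when `dexSet σ ⊆ T`: a value is keyed by
the block of its position, and within the block by whether it fails to be an excedance letter. -/
def blockKey (T : Finset ℕ) (σ : Equiv.Perm (Fin (m + 1))) (v : Fin (m + 1)) :
    Fin (m + 1) × Bool :=
  (blockIndex T (σ⁻¹ v), decide (v ≤ σ⁻¹ v))

theorem dexSet_subset_iff {σ : Equiv.Perm (Fin (m + 1))} :
    dexSet σ ⊆ T ↔ σ = Tuple.sort (toLex ∘ blockKey T σ) := by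
  have hinj : Function.Injective (flaggedWord σ) := fun i j hij =>
    σ.injective (congrArg (fun x => (ofLex x).2) hij)
  rw [dexSet, descentSet_subset_iff hinj, eq_sort_iff_strictMono_toLex]
  simp only [StrictMono, flaggedWord, blockKey, Function.comp_apply, Prod.Lex.toLex_lt_toLex,
    Equiv.Perm.coe_inv, Equiv.symm_apply_apply, toLex_inj, Prod.mk.injEq]
  exact forall₃_congr fun i j _ => by tauto

/-- The keys that occur at the value `v`: an excedance letter lies in the block of an earlier
position, or in a block before that one, any other letter in the block of the position `v` or
later. -/
def admissibleKeys (T : Finset ℕ) (v : Fin (m + 1)) : Finset (Fin (m + 1) × Bool) :=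
  {k | if k.2 then blockIndex T v ≤ k.1 else ∃ u < v, k.1 ≤ blockIndex T u}

theorem blockKey_mem_admissibleKeys (σ : Equiv.Perm (Fin (m + 1))) (v : Fin (m + 1)) :
    blockKey T σ v ∈ admissibleKeys T v := by
  simp only [admissibleKeys, blockKey, mem_filter, mem_univ, true_and, decide_eq_true_eq]
  split_ifs with h
  · exact monotone_blockIndex h
  · exact ⟨σ⁻¹ v, not_le.mp h, le_rfl⟩

section SortedKeys

variable {κ : Fin (m + 1) → Fin (m + 1) × Bool} {σ : Equiv.Perm (Fin (m + 1))}

theorem key_castSucc_lt_succ (hsort : σ = Tuple.sort (toLex ∘ κ))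
    (hblock : ∀ i, (κ (σ i)).1 = blockIndex T i) {i : Fin m}
    (hi : blockIndex T i.castSucc = blockIndex T i.succ) :
    toLex ((κ (σ i.castSucc)).2, σ i.castSucc) < toLex ((κ (σ i.succ)).2, σ i.succ) := by
  have h := eq_sort_iff_strictMono_toLex.mp hsort (Fin.castSucc_lt_succ (i := i))
  simp only [Function.comp_apply, Prod.Lex.toLex_lt_toLex, toLex_inj, Prod.ext_iff, hblock, hi,
    lt_irrefl, true_and, false_or] at h
  exact Prod.Lex.toLex_lt_toLex.mpr h

theorem lt_of_key_snd_eq_false (hsort : σ = Tuple.sort (toLex ∘ κ))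
    (hblock : ∀ i, (κ (σ i)).1 = blockIndex T i) (hκ : ∀ v, κ v ∈ admissibleKeys T v)
    (i : Fin (m + 1)) (hi : (κ (σ i)).2 = false) : i < σ i := by
  have hexists (i : Fin (m + 1)) (hi : (κ (σ i)).2 = false) :
      ∃ u < σ i, blockIndex T i ≤ blockIndex T u := by
    simpa [admissibleKeys, hi, hblock] using hκ (σ i)
  induction i using Fin.induction with
  | zero =>
    obtain ⟨u, hu, -⟩ := hexists 0 hi
    exact (Fin.zero_le u).trans_lt hu
  | succ i ih =>
    rcases (monotone_blockIndex (T := T) (Fin.castSucc_lt_succ (i := i)).le).eq_or_lt with heq | hlt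
    · have h := key_castSucc_lt_succ hsort hblock heq
      simp only [Prod.Lex.toLex_lt_toLex, hi, Bool.lt_iff, Bool.false_eq_true, and_false,
        false_or] at h
      have := ih h.1
      exact (Fin.castSucc_lt_iff_succ_le.mp this).trans_lt h.2
    · obtain ⟨u, hu, hle⟩ := hexists i.succ hi
      have := monotone_blockIndex.reflect_lt (hlt.trans_le hle)
      exact (Fin.castSucc_lt_iff_succ_le.mp this).trans_lt hu

theorem le_of_key_snd_eq_true (hsort : σ = Tuple.sort (toLex ∘ κ))
    (hblock : ∀ i, (κ (σ i)).1 = blockIndex T i) (hκ : ∀ v, κ v ∈ admissibleKeys T v)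
    (i : Fin (m + 1)) (hi : (κ (σ i)).2 = true) : σ i ≤ i := by
  have hle (i : Fin (m + 1)) (hi : (κ (σ i)).2 = true) : blockIndex T (σ i) ≤ blockIndex T i := by
    simpa [admissibleKeys, hi, hblock] using hκ (σ i)
  induction i using Fin.reverseInduction with
  | last => exact Fin.le_last _
  | cast i ih =>
    rcases (monotone_blockIndex (T := T) (Fin.castSucc_lt_succ (i := i)).le).eq_or_lt with heq | hlt
    · have h := key_castSucc_lt_succ hsort hblock heq
      simp only [Prod.Lex.toLex_lt_toLex, hi, Bool.lt_iff, Bool.true_eq_false, false_and,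
        false_or] at h
      exact Fin.le_castSucc_iff.mpr (h.2.trans_le (ih h.1.symm))
    · exact Fin.le_castSucc_iff.mpr
        (monotone_blockIndex.reflect_lt ((hle i.castSucc hi).trans_lt hlt))

theorem blockKey_sort (hκ : ∀ v, κ v ∈ admissibleKeys T v)
    (hcount : letterCount (Prod.fst ∘ κ) = letterCount (blockIndex T)) :
    blockKey T (Tuple.sort (toLex ∘ κ)) = κ := by
  set σ := Tuple.sort (toLex ∘ κ) with hsort
  have hmono : Monotone (Prod.fst ∘ κ ∘ σ) := fun i j hij =>
    Prod.Lex.monotone_fst _ _ (Tuple.monotone_sort (toLex ∘ κ) hij)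
  have hblock (i : Fin (m + 1)) : (κ (σ i)).1 = blockIndex T i :=
    congrFun (eq_of_monotone_of_letterCount_eq hmono monotone_blockIndex
      ((letterCount_comp_perm (Prod.fst ∘ κ) σ).trans hcount)) i
  have hflag (i : Fin (m + 1)) : (κ (σ i)).2 = decide (σ i ≤ i) := by
    cases hi : (κ (σ i)).2 with
    | false => simpa using lt_of_key_snd_eq_false hsort hblock hκ i hi
    | true => simpa using le_of_key_snd_eq_true hsort hblock hκ i hi
  funext v
  obtain ⟨i, rfl⟩ := σ.surjective v
  simp only [blockKey, Equiv.Perm.coe_inv, Equiv.symm_apply_apply, ← hblock, ← hflag]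

end SortedKeys

theorem prod_blockKey {R : Type*} [CommSemiring R] (t : R) (σ : Equiv.Perm (Fin (m + 1))) :
    ∏ v, (if (blockKey T σ v).2 then 1 else t) = t ^ pexc σ := by
  rw [← Equiv.prod_comp σ, pexc_eq_card]
  simp only [blockKey, Equiv.Perm.coe_inv, Equiv.symm_apply_apply, decide_eq_true_eq]
  rw [prod_ite, prod_const_one, one_mul, prod_const]
  simp only [not_le]

theorem sum_dexSet_subset {R : Type*} [CommSemiring R] (t : R) :
    ∑ σ : Equiv.Perm (Fin (m + 1)) with dexSet σ ⊆ T, t ^ pexc σ =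
      ∑ κ ∈ Fintype.piFinset (admissibleKeys T) with
          letterCount (Prod.fst ∘ κ) = letterCount (blockIndex T : Fin (m + 1) → Fin (m + 1)),
        ∏ v, if (κ v).2 then 1 else t := by
  refine sum_bij' (fun σ _ => blockKey T σ) (fun κ _ => Tuple.sort (toLex ∘ κ)) ?_ ?_ ?_ ?_ ?_
  · intro σ _
    exact mem_filter.mpr ⟨Fintype.mem_piFinset.mpr (blockKey_mem_admissibleKeys σ),
      letterCount_comp_perm (blockIndex T) σ⁻¹⟩
  · intro κ hκ
    obtain ⟨hadm, hcount⟩ := mem_filter.mp hκ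
    rw [mem_filter, dexSet_subset_iff, blockKey_sort (Fintype.mem_piFinset.mp hadm) hcount]
    exact ⟨mem_univ _, rfl⟩
  · intro σ hσ
    exact (dexSet_subset_iff.mp (mem_filter.mp hσ).2).symm
  · intro κ hκ
    obtain ⟨hadm, hcount⟩ := mem_filter.mp hκ
    exact blockKey_sort (Fintype.mem_piFinset.mp hadm) hcount
  · intro σ _
    exact (prod_blockKey t σ).symm

end Keys

/-! ### Comparison of the two generating functions -/

section Coefficients

variable {R ι α : Type*} [CommSemiring R] [Fintype ι]

theorem coeff_prod_sum_C_mul_X {β : Type*} [DecidableEq ι] [DecidableEq α] (K : ι → Finset β)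
    (f : β → R) (g : β → α) (a : α →₀ ℕ) :
    MvPolynomial.coeff a (∏ i, ∑ k ∈ K i, MvPolynomial.C (f k) * MvPolynomial.X (g k)) =
      ∑ κ ∈ Fintype.piFinset K with letterCount (g ∘ κ) = a, ∏ i, f (κ i) := by
  rw [prod_univ_sum, MvPolynomial.coeff_sum, sum_filter]
  refine sum_congr rfl fun κ _ => ?_
  rw [prod_mul_distrib, ← map_prod, MvPolynomial.coeff_C_mul, coeff_prod_X (fun i => g (κ i)),
    mul_ite, mul_one, mul_zero]
  rfl

theorem coeff_prod_C_mul_add (t : R) {ℓ : MvPolynomial α R} (hℓ : ℓ.IsHomogeneous 1)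
    {M : ι → MvPolynomial α R} (hM : ∀ i, (M i).IsHomogeneous 1) {a : α →₀ ℕ}
    (ha : a.degree = Fintype.card ι) :
    MvPolynomial.coeff a (∏ i, (MvPolynomial.C t * ℓ + M i)) =
      ∑ j ∈ range (Fintype.card ι + 1),
        t ^ j * MvPolynomial.coeff a (ℓ ^ j * ∏ i, (1 + M i)) := by
  classical
  simp only [prod_add, prod_const_one, prod_const, one_mul, mul_pow, ← map_pow, mul_sum, mul_assoc,
    MvPolynomial.coeff_sum, MvPolynomial.coeff_C_mul]
  rw [sum_comm]
  refine sum_congr rfl fun S _ => ?_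
  symm
  have hcard := card_le_univ S
  refine sum_eq_single_of_mem #S (mem_range_succ_iff.mpr hcard) fun j _ hj => ?_
  have hhom : (ℓ ^ j * ∏ i ∈ univ \ S, M i).IsHomogeneous (1 * j + ∑ i ∈ univ \ S, 1) :=
    (hℓ.pow j).mul (.prod _ M _ fun i _ => hM i)
  have hdegree : a.degree ≠ 1 * j + ∑ i ∈ univ \ S, 1 := by
    rw [ha, sum_const, smul_eq_mul, card_univ_sdiff]
    lia
  rw [hhom.coeff_eq_zero hdegree, mul_zero]

theorem prod_ite_exists_lt {M : Type*} [LinearOrder α] [CommMonoid M] {S : Finset α} {k : ℕ}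
    (hS : #S = k + 1) (x y : M) : ∏ v ∈ S, (if ∃ u ∈ S, u < v then x else y) = x ^ k * y := by
  have hne : S.Nonempty := card_pos.mp (by lia)
  have hmin : ¬∃ u ∈ S, u < S.min' hne  :=
    fun ⟨u, hu, hlt⟩ => (S.min'_le u hu).not_gt hlt
  have hlater : ∀ v ∈ S.erase (S.min' hne), ∃ u ∈ S, u < v := fun v hv =>
    ⟨_, S.min'_mem hne, S.min'_lt_of_mem_erase_min' hne hv⟩
  rw [← mul_prod_erase S _ (S.min'_mem hne), if_neg hmin,
    prod_congr rfl fun v hv => if_pos (hlater v hv), prod_const,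
    card_erase_of_mem (S.min'_mem hne), hS, Nat.add_sub_cancel, mul_comm]

end Coefficients

section KeyForm

section Semiring

variable {R : Type*} [CommSemiring R] {m : ℕ} {T : Finset ℕ}

/-- The linear form by which the weighted sum of the admissible keys at `v` exceeds `t * ∑ X b`,
where `s = 1 - t`. -/
noncomputable def keyForm (s : R) (T : Finset ℕ) (v : Fin (m + 1)) : MvPolynomial (Fin (m + 1)) R :=
  MvPolynomial.C (if ∃ u < v, blockIndex T u = blockIndex T v then 1 else s) *
      MvPolynomial.X (blockIndex T v) +
    MvPolynomial.C s * ∑ b ∈ Ioi (blockIndex T v), MvPolynomial.X b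

theorem isHomogeneous_sum_X {α : Type*} (S : Finset α) :
    (∑ b ∈ S, MvPolynomial.X b : MvPolynomial α R).IsHomogeneous 1 :=
  MvPolynomial.IsHomogeneous.sum _ _ _ fun b _ => MvPolynomial.isHomogeneous_X R b

theorem isHomogeneous_keyForm (s : R) (v : Fin (m + 1)) : (keyForm s T v).IsHomogeneous 1 :=
  ((MvPolynomial.isHomogeneous_X R _).C_mul _).add ((isHomogeneous_sum_X _).C_mul _)

theorem exists_le_blockIndex_iff {v b : Fin (m + 1)} :
    (∃ u < v, b ≤ blockIndex T u) ↔
      b < blockIndex T v ∨ b = blockIndex T v ∧ ∃ u < v, blockIndex T u = blockIndex T v := by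
  constructor
  · rintro ⟨u, hu, hb⟩
    have huv : blockIndex T u ≤ blockIndex T v := monotone_blockIndex hu.le
    refine (hb.trans huv).lt_or_eq.imp_right fun heq => ⟨heq, u, hu, ?_⟩
    exact huv.antisymm (heq ▸ hb)
  · rintro (hb | ⟨rfl, u, hu, heq⟩)
    · exact exists_le_blockIndex_of_lt hb
    · exact ⟨u, hu, heq.ge⟩

theorem prod_one_add_keyForm (s : R) :
    ∏ v : Fin (m + 1), (1 + keyForm s T v) =
      ∏ c, blockFactor s c (letterCount (blockIndex T : Fin (m + 1) → Fin (m + 1)) c) := by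
  rw [← prod_fiberwise univ (blockIndex T)]
  refine prod_congr rfl fun c _ => ?_
  rw [letterCount_apply]
  set S : Finset (Fin (m + 1)) := {v | blockIndex T v = c} with hS
  rcases hk : #S with - | k
  · simp [card_eq_zero.mp hk, blockFactor]
  rw [blockFactor, ← prod_ite_exists_lt hk]
  refine prod_congr rfl fun v hv => ?_
  have hvc : blockIndex T v = c := (mem_filter.mp hv).2
  have hexists : (∃ u < v, blockIndex T u = c) ↔ ∃ u ∈ S, u < v := by
    simp [hS, and_comm]
  simp only [keyForm, hvc, hexists]
  split_ifs
  · rw [map_one, one_mul, add_assoc]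
  · rw [← add_sum_Ioi_eq_sum_Ici, mul_add]

end Semiring

theorem sum_admissibleKeys {R : Type*} [CommRing R] {m : ℕ} {T : Finset ℕ} (t : R)
    (v : Fin (m + 1)) :
    ∑ k ∈ admissibleKeys T v, MvPolynomial.C (if k.2 then 1 else t) * MvPolynomial.X k.1 =
      MvPolynomial.C t * ∑ b, MvPolynomial.X b + keyForm (1 - t) T v := by
  set c := blockIndex T v with hc
  have hsplit : ∑ b, MvPolynomial.X b = ∑ b ∈ Iio c, MvPolynomial.X b +
      (MvPolynomial.X c + ∑ b ∈ Ioi c, (MvPolynomial.X b : MvPolynomial (Fin (m + 1)) R)) := by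
    rw [add_sum_Ioi_eq_sum_Ici, ← sum_filter_not_add_sum_filter univ (c ≤ ·), filter_le_eq_Ici]
    simp only [not_le, filter_gt_eq_Iio]
  rw [admissibleKeys, sum_filter, Fintype.sum_prod_type_right, Fintype.sum_bool]
  simp only [if_true, Bool.false_eq_true, if_false, map_one, one_mul, exists_le_blockIndex_iff,
    ← hc]
  rw [keyForm, ← hc, hsplit]
  split_ifs with h
  · simp only [h, and_true, ← le_iff_lt_or_eq]
    rw [← sum_filter, ← sum_filter, filter_le_eq_Ici, filter_ge_eq_Iic, ← sum_Iio_add_eq_sum_Iic,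
      ← add_sum_Ioi_eq_sum_Ici, ← mul_sum, map_sub, map_one]
    ring
  · simp only [h, and_false, or_false]
    rw [← sum_filter, ← sum_filter, filter_le_eq_Ici, filter_gt_eq_Iio,
      ← add_sum_Ioi_eq_sum_Ici, ← mul_sum, map_sub, map_one]
    ring

end KeyForm

section InclusionExclusion

variable {α ι κ A : Type*}

theorem eq_zero_of_sum_powerset_eq_zero [AddCommMonoid A] {g : Finset α → A}
    (hg : ∀ T : Finset α, ∑ U ∈ T.powerset, g U = 0) (S : Finset α) : g S = 0 := by
  induction S using Finset.strongInduction with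
  | _ S ih =>
    rw [← hg S, sum_eq_single_of_mem S (mem_powerset_self S)]
    exact fun U hU hne => ih U ((mem_powerset.mp hU).ssubset_of_ne hne)

theorem sum_mul_eq_sum_mul_of_sum_subset_eq [DecidableEq α] [Fintype ι] [Fintype κ]
    [NonUnitalNonAssocRing A] {F : ι → Finset α} {H : κ → Finset α}
    {f : ι → A} {h : κ → A}
    (hsum : ∀ T, ∑ i with F i ⊆ T, f i = ∑ j with H j ⊆ T, h j) (wt : Finset α → A) :
    ∑ i, wt (F i) * f i = ∑ j, wt (H j) * h j := by
  have hfiber (S : Finset α) : ∑ i with F i = S, f i = ∑ j with H j = S, h j := by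
    refine sub_eq_zero.mp (eq_zero_of_sum_powerset_eq_zero
      (g := fun S => ∑ i with F i = S, f i - ∑ j with H j = S, h j) (fun T => ?_) S)
    rw [sum_sub_distrib, sum_fiberwise_eq_sum_filter, sum_fiberwise_eq_sum_filter]
    simpa only [mem_powerset] using sub_eq_zero.mpr (hsum T)
  rw [← sum_fiberwise_of_maps_to (t := univ.image F ∪ univ.image H) (g := F) (by simp),
    ← sum_fiberwise_of_maps_to (s := (univ : Finset κ)) (t := univ.image F ∪ univ.image H) (g := H)
      (by simp)]
  refine sum_congr rfl fun S _ => ?_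
  calc ∑ i with F i = S, wt (F i) * f i = wt S * ∑ i with F i = S, f i := by
        rw [mul_sum]
        exact sum_congr rfl fun i hi => by rw [(mem_filter.mp hi).2]
    _ = wt S * ∑ j with H j = S, h j := by rw [hfiber]
    _ = ∑ j with H j = S, wt (H j) * h j := by
        rw [mul_sum]
        exact sum_congr rfl fun j hj => by rw [(mem_filter.mp hj).2]

end InclusionExclusion

section MainIdentity

theorem coeff_sum_wordTerm_eq_sum {R : Type*} [CommSemiring R] {m : ℕ} (t : R) {r : ℕ}
    (a : Fin r →₀ ℕ) :
    MvPolynomial.coeff a (∑ w : Fin (m + 1) → Fin r, wordTerm t w) =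
      ∑ w : Fin (m + 1) → Fin r with letterCount w = a, gammaWeight t m (descentSet w) := by
  simp only [MvPolynomial.coeff_sum, wordTerm, MvPolynomial.coeff_C_mul, coeff_prod_X, mul_ite,
    mul_one, mul_zero, sum_filter]

theorem sum_pow_pexc_eq_sum_gammaWeight {R : Type*} [CommRing R] [IsDomain R] {m : ℕ} {t : R}
    (ht : t ≠ 1) (T : Finset ℕ) :
    ∑ σ : Equiv.Perm (Fin (m + 1)) with dexSet σ ⊆ T, t ^ pexc σ =
      ∑ σ : Equiv.Perm (Fin (m + 1)) with descentSet (σ⁻¹ : Equiv.Perm (Fin (m + 1))) ⊆ T,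
        gammaWeight t m (descentSet σ) := by
  set a := letterCount (blockIndex T : Fin (m + 1) → Fin (m + 1)) with ha
  have hdegree : a.degree = m + 1 := by rw [ha, degree_letterCount, Fintype.card_fin]
  calc ∑ σ : Equiv.Perm (Fin (m + 1)) with dexSet σ ⊆ T, t ^ pexc σ
      = MvPolynomial.coeff a (∏ v, ∑ k ∈ admissibleKeys T v,
          MvPolynomial.C (if k.2 then 1 else t) * MvPolynomial.X k.1) := by
        rw [sum_dexSet_subset, coeff_prod_sum_C_mul_X]
    _ = ∑ j ∈ range (m + 2), t ^ j * MvPolynomial.coeff a ((∑ b, MvPolynomial.X b) ^ j *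
          ∏ v, (1 + keyForm (1 - t) T v)) := by
        simp only [sum_admissibleKeys]
        rw [coeff_prod_C_mul_add t (isHomogeneous_sum_X univ) (isHomogeneous_keyForm (1 - t))
          (by rw [hdegree, Fintype.card_fin]), Fintype.card_fin]
    _ = MvPolynomial.coeff a (∑ w : Fin (m + 1) → Fin (m + 1), wordTerm t w) := by
        rw [prod_one_add_keyForm, coeff_sum_wordTerm ht hdegree]
    _ = _ := by rw [coeff_sum_wordTerm_eq_sum, ← sum_descentSet_inv_subset (gammaWeight t m)]

theorem sum_mul_pow_pexc_eq_sum_mul_gammaWeight {R : Type*} [CommRing R] [IsDomain R] {m : ℕ}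
    {t : R} (ht : t ≠ 1) (wt : Finset ℕ → R) :
    ∑ σ : Equiv.Perm (Fin (m + 1)), wt (dexSet σ) * t ^ pexc σ =
      ∑ σ : Equiv.Perm (Fin (m + 1)),
        wt (descentSet (σ⁻¹ : Equiv.Perm (Fin (m + 1)))) * gammaWeight t m (descentSet σ) :=
  sum_mul_eq_sum_mul_of_sum_subset_eq (sum_pow_pexc_eq_sum_gammaWeight ht) wt

end MainIdentity

/-- In `ℤ[p,q,t]` (with `p = X 0`, `q = X 1`, `t = X 2`), the `(p,q)`-analog of
the γ-expansion of the Eulerian polynomial for decorated-permutation statistics: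
`Σ_{σ ∈ S_n} p^{des*(σ)} q^{maj(σ)-exc(σ)} t^{exc(σ)}
  = Σ_k ξ_{n,k}(p,q) t^k (1+t)^{n-1-2k}`, where
`ξ_{n,k}(p,q) = Σ p^{des(σ⁻¹)} q^{maj(σ⁻¹)}` over all `σ ∈ S_n` with
`DES(σ) ⊆ [1,n-2]`, no two consecutive descents, and exactly `k` descents. -/
theorem pq_gamma (n : ℕ) (hn : 1 ≤ n) :
    (∑ σ : Equiv.Perm (Fin n),
        (MvPolynomial.X 0 : MvPolynomial (Fin 3) ℤ) ^ pdesStar σ *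
          MvPolynomial.X 1 ^ (pmaj σ - pexc σ) * MvPolynomial.X 2 ^ pexc σ) =
    ∑ k ∈ Finset.range ((n - 1) / 2 + 1),
      (∑ σ ∈ Finset.univ.filter
          (fun σ : Equiv.Perm (Fin n) =>
            pDES σ ⊆ Finset.Icc 1 (n - 2) ∧ NoTwoConsec (pDES σ) ∧ (pDES σ).card = k),
        (MvPolynomial.X 0 : MvPolynomial (Fin 3) ℤ) ^ pdes (σ⁻¹) *
          MvPolynomial.X 1 ^ pmaj (σ⁻¹)) *
        MvPolynomial.X 2 ^ k * (1 + MvPolynomial.X 2) ^ (n - 1 - 2 * k) := by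
  obtain ⟨m, rfl⟩ : ∃ m, n = m + 1 := ⟨n - 1, by lia⟩
  have ht : (MvPolynomial.X 2 : MvPolynomial (Fin 3) ℤ) ≠ 1 := fun h => by
    simpa using congrArg (MvPolynomial.eval 0) h
  have hweighted := sum_mul_pow_pexc_eq_sum_mul_gammaWeight (m := m) ht
    fun D => MvPolynomial.X 0 ^ #D * MvPolynomial.X 1 ^ ∑ i ∈ D, i
  rw [sum_mul_gammaWeight] at hweighted
  simp only [card_dexSet, sum_dexSet, ← pDES_eq_descentSet] at hweighted
  exact hweighted
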